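/- For every integer r ≥ 6, the r × (2^r - 1) matrix whose columns are exactly all the distinct nonzero vectors of F_2^r (each appearing exactly once) is a functional k-batch code with k = 2^{r-2} + 2^{r-4} + ⌊2^{r/2}/√24⌋. -/

import Mathlib

/-!
The columns are all nonzero vectors of `V = F_2 ^ r`; put `N = 2 ^ r`. The requests are served one
after the other by disjoint subsets of `V`, and `F` denotes the set of vectors still free. The zero
vector takes part as well, since deleting it from a recovering set does not change the sum.

* While `|F| > N / 2`, the set `F` meets each of its translates (`exists_add_mem`), so a request
  takes at most two vectors. This serves `N / 4 = 2 ^ (r - 2)` requests.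
* While `|F| > N / 4` and `F` spans `V`, every vector is a sum of at most four elements of `F`
  (`shortSum_four`), which serves `N / 16 = 2 ^ (r - 4)` more requests. The reason: if `v` is not
  such a sum, then `F` and `F + v` are disjoint and `E = F ∪ (F + v)` fills more than half of `V`.
  For all `x, y` some coset of `⟨x, y⟩` therefore contains three points of `E` (`exists_corner`),
  and from this `F + F` is found to be a subgroup that contains `F` but not `v`.
* The last `c = ⌊2 ^ (r / 2) / √24⌋` requests are answered by shortest representations, of length at
  most `r`; for this `F` only has to span `V` (`shortSum_of_span_eq_top`).

It remains to keep `F` spanning. Suppose the span `K` of `F` is proper. As `|F| > N / 8`, the index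
of `K` is two or four, and all of `V \ K` is in use. There are so few requests that one recovering
set contains two, respectively three, vectors outside `K`, and then some subset `D` of these, with
`|D| ≥ 2`, has its sum in `K` (`exists_relation`). Trade `D` for a set `S ⊆ F` with the same sum:
`|S| ≤ 4`, and `|S| ≤ 2` if `F` is more than half of `K`. When `S` is chosen with care, the span of
the free set strictly grows (`exists_exchange_set`, `Served.enlarge_span`). At most two such steps
are needed, and if the index is four then the first of them is free, so at most two vectors are
lost, and none while `|F| > N / 4` (`Served.exists_span_eq_top`). Hence each of the last requests
costs at most `r + 2` vectors, and `c (r + 2)` is small enough for `|F|` to stay above `N / 8`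
(`floor_bounds`).
-/

open scoped BigOperators

/-- `G` is a functional `k`-PIR code of dimension `s` and length `n`: for every nonzero
request `v : F_2^s` there are `k` pairwise disjoint sets of column indices, each of whose
columns sum to `v`. -/
def IsFunctionalPIR (s n k : ℕ) (G : Matrix (Fin s) (Fin n) (ZMod 2)) : Prop :=
  ∀ v : Fin s → ZMod 2, v ≠ 0 →
    ∃ R : Fin k → Finset (Fin n),
      (∀ j j' : Fin k, j ≠ j' → Disjoint (R j) (R j')) ∧
      (∀ j : Fin k, ∀ i : Fin s, ∑ l ∈ R j, G i l = v i)

/-- `G` is a functional `k`-batch code of dimension `s` and length `n`: for every `k`-tuple of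
nonzero requests there are `k` pairwise disjoint sets of column indices such that the columns
of the `j`-th set sum to the `j`-th request. -/
def IsFunctionalBatch (s n k : ℕ) (G : Matrix (Fin s) (Fin n) (ZMod 2)) : Prop :=
  ∀ v : Fin k → (Fin s → ZMod 2), (∀ j, v j ≠ 0) →
    ∃ R : Fin k → Finset (Fin n),
      (∀ j j' : Fin k, j ≠ j' → Disjoint (R j) (R j')) ∧
      (∀ j : Fin k, ∀ i : Fin s, ∑ l ∈ R j, G i l = v j i)

/-- `FP s k` is the minimum length of a functional `k`-PIR code of dimension `s`. -/
noncomputable def FP (s k : ℕ) : ℕ :=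
  sInf {n : ℕ | ∃ G : Matrix (Fin s) (Fin n) (ZMod 2), IsFunctionalPIR s n k G}

/-- `FB s k` is the minimum length of a functional `k`-batch code of dimension `s`. -/
noncomputable def FB (s k : ℕ) : ℕ :=
  sInf {n : ℕ | ∃ G : Matrix (Fin s) (Fin n) (ZMod 2), IsFunctionalBatch s n k G}


set_option linter.unusedSectionVars false

/-! ### Sums in characteristic two -/

section Sums

variable {V : Type*} [AddCommGroup V] [Module (ZMod 2) V]

theorem add_self_zmod2 (x : V) : x + x = 0 := by
  have h : (2 : ZMod 2) • x = x + x := two_smul _ x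
  rw [← h, show (2 : ZMod 2) = 0 from rfl, zero_smul]

theorem add_add_cancel_zmod2 (x y : V) : x + y + y = x := by
  rw [add_assoc, add_self_zmod2, add_zero]

theorem add_eq_iff_zmod2 {x y z : V} : x + y = z ↔ x = z + y :=
  ⟨fun h => by rw [← h, add_add_cancel_zmod2], fun h => by rw [h, add_add_cancel_zmod2]⟩

/-- Over `F_2` the span of a set is its closure under addition, together with `0`. -/
theorem span_induction_zmod2 {F : Set V} {P : V → Prop} (hF : ∀ x ∈ F, P x) (h0 : P 0)
    (hadd : ∀ x y, P x → P y → P (x + y)) {v : V} (hv : v ∈ Submodule.span (ZMod 2) F) : P v := by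
  induction hv using Submodule.span_induction with
  | mem x hx => exact hF x hx
  | zero => exact h0
  | add x y _ _ hx hy => exact hadd x y hx hy
  | smul a x _ hx =>
    have ha : a = 0 ∨ a = 1 := by revert a; decide
    rcases ha with rfl | rfl
    · rwa [zero_smul]
    · rwa [one_smul]

variable [DecidableEq V]

theorem sum_symmDiff_zmod2 (S T : Finset V) :
    ∑ x ∈ symmDiff S T, x = ∑ x ∈ S, x + ∑ x ∈ T, x := by
  have h1 : ∑ x ∈ symmDiff S T, x = ∑ x ∈ S \ T, x + ∑ x ∈ T \ S, x :=
    Finset.sum_union (disjoint_sdiff_sdiff)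
  have h2 := Finset.sum_inter_add_sum_sdiff S T (fun x => x)
  have h3 := Finset.sum_inter_add_sum_sdiff T S (fun x => x)
  rw [Finset.inter_comm] at h3
  rw [h1, ← h2, ← h3]
  have := add_self_zmod2 (∑ x ∈ S ∩ T, x)
  calc _ = (∑ x ∈ S ∩ T, x + ∑ x ∈ S ∩ T, x) + (∑ x ∈ S \ T, x + ∑ x ∈ T \ S, x) := by
        rw [this, zero_add]
    _ = _ := by abel

/-- `v` is a sum of at most `m` distinct elements of `F`. -/
def ShortSum (F : Finset V) (m : ℕ) (v : V) : Prop :=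
  ∃ S ⊆ F, S.card ≤ m ∧ ∑ x ∈ S, x = v

theorem ShortSum.mono {F F' : Finset V} {m m' : ℕ} {v : V} (h : ShortSum F m v) (hF : F ⊆ F')
    (hm : m ≤ m') : ShortSum F' m' v := by
  obtain ⟨S, h1, h2, h3⟩ := h
  exact ⟨S, h1.trans hF, h2.trans hm, h3⟩

/-- Repetitions cancel in characteristic two, so short sums add up. -/
theorem ShortSum.add {F : Finset V} {m n : ℕ} {v w : V} (hv : ShortSum F m v)
    (hw : ShortSum F n w) : ShortSum F (m + n) (v + w) := by
  obtain ⟨S, h1, h2, rfl⟩ := hv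
  obtain ⟨T, h3, h4, rfl⟩ := hw
  refine ⟨symmDiff S T, ?_, ?_, sum_symmDiff_zmod2 S T⟩
  · exact (Finset.symmDiff_subset_union).trans (Finset.union_subset h1 h3)
  · have := Finset.card_le_card (Finset.symmDiff_subset_union (s := S) (t := T))
    have := Finset.card_union_le S T
    omega

theorem ShortSum.of_mem {F : Finset V} {x : V} (hx : x ∈ F) : ShortSum F 1 x :=
  ⟨{x}, by simpa using hx, by simp, by simp⟩

theorem ShortSum.zero (F : Finset V) : ShortSum F 0 0 := ⟨∅, by simp, by simp, by simp⟩

theorem ShortSum.mem_of_le {F : Finset V} {m : ℕ} {v : V} (h : ShortSum F m v)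
    {K : Submodule (ZMod 2) V} (hF : ∀ x ∈ F, x ∈ K) : v ∈ K := by
  obtain ⟨S, h1, -, rfl⟩ := h
  exact K.sum_mem fun x hx => hF x (h1 hx)

end Sums

/-! ### Dense sets and short sums -/

section Density

variable {V : Type*} [AddCommGroup V] [Module (ZMod 2) V] [Fintype V] [DecidableEq V]

theorem card_le_of_subset_submodule (K : Submodule (ZMod 2) V) (E : Finset V)
    (hE : ∀ x ∈ E, x ∈ K) : E.card ≤ Nat.card K := by
  have h : Nat.card (E : Set V) = E.card := by simp
  rw [← h]
  exact Nat.card_mono (Set.toFinite (K : Set V)) (fun x hx => hE x hx)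

theorem natCard_top : Nat.card (⊤ : Submodule (ZMod 2) V) = Fintype.card V := by
  rw [Nat.card_congr (Submodule.topEquiv (R := ZMod 2) (M := V)).toEquiv,
    Nat.card_eq_fintype_card]

theorem card_map_add (E : Finset V) (a : V) : (E.image (· + a)).card = E.card :=
  Finset.card_image_of_injective _ (add_left_injective a)

/-- A subset of more than half of `K` meets each of its translates by an element of `K`. -/
theorem exists_add_mem (K : Submodule (ZMod 2) V) (E : Finset V)
    (hE : ∀ x ∈ E, x ∈ K) (hc : Nat.card K < 2 * E.card) {d : V} (hd : d ∈ K) :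
    ∃ x ∈ E, x + d ∈ E := by
  by_contra! h
  have hdis : Disjoint E (E.image (· + d)) := by
    rw [Finset.disjoint_left]
    intro x hx hx'
    obtain ⟨y, hy, rfl⟩ := Finset.mem_image.1 hx'
    exact h y hy hx
  have h1 := card_le_of_subset_submodule K (E ∪ E.image (· + d)) (by
    intro x hx
    rcases Finset.mem_union.1 hx with hx | hx
    · exact hE x hx
    · obtain ⟨y, hy, rfl⟩ := Finset.mem_image.1 hx
      exact K.add_mem (hE y hy) hd)
  rw [Finset.card_union_of_disjoint hdis, card_map_add] at h1
  omega

theorem shortSum_two (K : Submodule (ZMod 2) V) (F : Finset V)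
    (hF : ∀ x ∈ F, x ∈ K) (hc : Nat.card K < 2 * F.card) {d : V} (hd : d ∈ K) :
    ShortSum F 2 d := by
  obtain ⟨x, hx, hy⟩ := exists_add_mem K F hF hc hd
  have := (ShortSum.of_mem hx).add (ShortSum.of_mem hy)
  rwa [← add_assoc, add_self_zmod2, zero_add] at this

/-- In a set `E` of more than half of `K`, the two differences `x` and `y` occur at a common
base point: a coset of `⟨x, y⟩` contains three points of `E`. -/
theorem exists_corner (K : Submodule (ZMod 2) V) (E : Finset V)
    (hE : ∀ x ∈ E, x ∈ K) (hc : Nat.card K < 2 * E.card) {x y : V} (hx : x ∈ K) (hy : y ∈ K) :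
    ∃ w ∈ E, w + x ∈ E ∧ w + y ∈ E := by
  by_contra! h
  -- `A` is the `x`-invariant part of `E`; a missing corner makes the three sets below disjoint.
  set A := E.filter (fun w => w + x ∈ E) with hA
  set A' := E.filter (fun w => w + x ∉ E) with hA'
  have hcard : A.card + A'.card = E.card := Finset.card_filter_add_card_filter_not _
  have d1 : Disjoint E (A.image (· + y)) := by
    rw [Finset.disjoint_left]
    intro z hz hz'
    obtain ⟨w, hw, rfl⟩ := Finset.mem_image.1 hz'
    rw [hA, Finset.mem_filter] at hw
    exact h w hw.1 hw.2 hz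
  have d2 : Disjoint E (A'.image (· + x)) := by
    rw [Finset.disjoint_left]
    intro z hz hz'
    obtain ⟨w, hw, rfl⟩ := Finset.mem_image.1 hz'
    rw [hA', Finset.mem_filter] at hw
    exact hw.2 hz
  have d3 : Disjoint (A.image (· + y)) (A'.image (· + x)) := by
    rw [Finset.disjoint_left]
    intro z hz hz'
    obtain ⟨w, hw, rfl⟩ := Finset.mem_image.1 hz
    obtain ⟨u, hu, huw⟩ := Finset.mem_image.1 hz'
    rw [hA, Finset.mem_filter] at hw
    rw [hA', Finset.mem_filter] at hu
    have hu' : u = w + x + y := by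
      have := add_eq_iff_zmod2.1 huw
      rw [this]; abel
    exact h (w + x) hw.2 (by rw [add_add_cancel_zmod2]; exact hw.1) (hu' ▸ hu.1)
  have h1 := card_le_of_subset_submodule K (E ∪ (A.image (· + y) ∪ A'.image (· + x))) (by
    intro z hz
    simp only [Finset.mem_union, Finset.mem_image] at hz
    rcases hz with hz | ⟨w, hw, rfl⟩ | ⟨w, hw, rfl⟩
    · exact hE z hz
    · exact K.add_mem (hE w (Finset.mem_filter.1 hw).1) hy
    · exact K.add_mem (hE w (Finset.mem_filter.1 hw).1) hx)
  rw [Finset.card_union_of_disjoint (Finset.disjoint_union_right.2 ⟨d1, d2⟩),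
    Finset.card_union_of_disjoint d3, card_map_add, card_map_add] at h1
  omega

/-- A set of more than a quarter of the subspace it spans represents every element of
that subspace by at most four of its elements. -/
theorem shortSum_four (F : Finset V)
    (hc : Nat.card (Submodule.span (ZMod 2) (F : Set V)) < 4 * F.card) {v : V}
    (hv : v ∈ Submodule.span (ZMod 2) (F : Set V)) : ShortSum F 4 v := by
  by_contra hno
  set K := Submodule.span (ZMod 2) (F : Set V) with hK
  have hFK : ∀ x ∈ F, x ∈ K := fun x hx => Submodule.subset_span hx
  -- `B = F + F`; if `v` is not a short sum, `B` turns out to be a subgroup containing `F`.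
  let B : V → Prop := fun x => ∃ a ∈ F, ∃ b ∈ F, x = a + b
  have hBs : ∀ x, B x → ShortSum F 2 x := by
    rintro x ⟨a, ha, b, hb, rfl⟩
    exact (ShortSum.of_mem ha).add (ShortSum.of_mem hb)
  have hBB : ∀ x y, B x → B y → x + y ≠ v := by
    intro x y hx hy hxy
    exact hno (hxy ▸ (hBs x hx).add (hBs y hy))
  have hBv : ¬ B v := fun h => hno ((hBs v h).mono subset_rfl (by norm_num))
  set E := F ∪ F.image (· + v) with hE
  have hdis : Disjoint F (F.image (· + v)) := by
    rw [Finset.disjoint_left]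
    intro x hx hx'
    obtain ⟨y, hy, rfl⟩ := Finset.mem_image.1 hx'
    exact hBv ⟨y, hy, y + v, hx, by rw [← add_assoc, add_self_zmod2, zero_add]⟩
  have hEc : E.card = 2 * F.card := by
    rw [hE, Finset.card_union_of_disjoint hdis, card_map_add]; omega
  have hEK : ∀ x ∈ E, x ∈ K := by
    intro x hx
    rcases Finset.mem_union.1 hx with hx | hx
    · exact hFK x hx
    · obtain ⟨y, hy, rfl⟩ := Finset.mem_image.1 hx
      exact K.add_mem (hFK y hy) hv
  have hE2 : Nat.card K < 2 * E.card := by omega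
  have hEmem : ∀ x ∈ E, x ∈ F ∨ x + v ∈ F := by
    intro x hx
    rcases Finset.mem_union.1 hx with hx | hx
    · exact Or.inl hx
    · obtain ⟨y, hy, rfl⟩ := Finset.mem_image.1 hx
      exact Or.inr (by rwa [add_add_cancel_zmod2])
  -- two points of `E` differ by an element of `B` or of `B + v`
  have hdiff : ∀ w z, w ∈ E → w + z ∈ E → B z ∨ B (z + v) := by
    intro w z hw hz
    have e1 : z = w + (w + z) := by rw [← add_assoc, add_self_zmod2, zero_add]
    rcases hEmem w hw with h1 | h1 <;> rcases hEmem _ hz with h2 | h2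
    · exact Or.inl ⟨_, h1, _, h2, e1⟩
    · refine Or.inr ⟨_, h1, _, h2, ?_⟩
      rw [← add_assoc, ← e1]
    · refine Or.inr ⟨_, h1, _, h2, ?_⟩
      rw [add_right_comm, ← e1]
    · refine Or.inl ⟨_, h1, _, h2, ?_⟩
      calc z = z + (w + w) + (v + v) := by rw [add_self_zmod2, add_self_zmod2]; simp
        _ = _ := by abel
  have hcov : ∀ x ∈ K, B x ∨ B (x + v) := by
    intro x hx
    obtain ⟨w, hw, hwx⟩ := exists_add_mem K E hEK hE2 hx
    exact hdiff w x hw hwx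
  have hadd : ∀ x y, B x → B y → B (x + y) := by
    intro x y hx hy
    have hxK : x ∈ K := (hBs x hx).mem_of_le hFK
    have hyK : y ∈ K := (hBs y hy).mem_of_le hFK
    obtain ⟨w, hw, hwx, hwy⟩ := exists_corner K E hEK hE2 hxK hyK
    -- since `x, y ∈ B`, the three corner points lie all in `F` or all in `F + v`
    have key : ∀ z, B z → w + z ∈ E → (w ∈ F ∧ w + z ∈ F) ∨ (w + v ∈ F ∧ w + z + v ∈ F) := by
      intro z hz hwz
      rcases hEmem w hw with h1 | h1 <;> rcases hEmem _ hwz with h2 | h2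
      · exact Or.inl ⟨h1, h2⟩
      · exfalso
        refine hBB z (w + (w + z + v)) hz ⟨_, h1, _, h2, rfl⟩ ?_
        calc z + (w + (w + z + v)) = (z + z) + (w + w) + v := by abel
          _ = v := by simp [add_self_zmod2]
      · exfalso
        refine hBB z (w + v + (w + z)) hz ⟨_, h1, _, h2, rfl⟩ ?_
        calc z + (w + v + (w + z)) = (z + z) + (w + w) + v := by abel
          _ = v := by simp [add_self_zmod2]
      · exact Or.inr ⟨h1, h2⟩
    rcases key x hx hwx with ⟨a1, a2⟩ | ⟨a1, a2⟩ <;> rcases key y hy hwy with ⟨b1, b2⟩ | ⟨b1, b2⟩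
    · refine ⟨_, a2, _, b2, ?_⟩
      calc x + y = x + y + (w + w) := by rw [add_self_zmod2, add_zero]
        _ = _ := by abel
    · exact absurd ⟨_, a1, _, b1, by rw [← add_assoc, add_self_zmod2, zero_add]⟩ hBv
    · exact absurd ⟨_, b1, _, a1, by rw [← add_assoc, add_self_zmod2, zero_add]⟩ hBv
    · refine ⟨_, a2, _, b2, ?_⟩
      calc x + y = x + y + (w + w) + (v + v) := by simp [add_self_zmod2]
        _ = _ := by abel
  have hFB : ∀ f ∈ F, B f := by
    intro f hf
    rcases hcov (v + f) (K.add_mem hv (hFK f hf)) with h | h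
    · exfalso
      have := (hBs _ h).add (ShortSum.of_mem hf)
      rw [add_add_cancel_zmod2] at this
      exact hno (this.mono subset_rfl (by norm_num))
    · rwa [add_comm, ← add_assoc, add_self_zmod2, zero_add] at h
  have hFne : F.Nonempty := by
    rw [← Finset.card_pos]; omega
  obtain ⟨f, hf⟩ := hFne
  have hB0 : B 0 := ⟨f, hf, f, hf, (add_self_zmod2 f).symm⟩
  refine hBv ?_
  exact span_induction_zmod2 hFB hB0 hadd hv

theorem two_mul_card_le_of_lt {L K : Submodule (ZMod 2) V} (h : L < K) :
    2 * Nat.card L ≤ Nat.card K := by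
  obtain ⟨x, hxK, hxL⟩ := SetLike.exists_of_lt h
  by_contra hc
  classical
  have hcard : (Finset.univ.filter (· ∈ L) : Finset V).card = Nat.card L := by
    rw [Nat.card_eq_fintype_card, Fintype.card_subtype]
  obtain ⟨y, hy, hyx⟩ := exists_add_mem K (Finset.univ.filter (· ∈ L))
    (fun y hy => h.le (Finset.mem_filter.1 hy).2) (by omega) hxK
  simp only [Finset.mem_filter, Finset.mem_univ, true_and] at hy hyx
  exact hxL ((L.add_mem_iff_right hy).1 hyx)

theorem span_eq_of_half (K : Submodule (ZMod 2) V) (F : Finset V)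
    (hF : ∀ x ∈ F, x ∈ K) (hc : Nat.card K < 2 * F.card) :
    Submodule.span (ZMod 2) (F : Set V) = K :=
  le_antisymm (Submodule.span_le.2 hF) fun _ hd =>
    (shortSum_two K F hF hc hd).mem_of_le fun _ hx => Submodule.subset_span hx

/-- An element `d` of the span of `F` can be written as a short sum over `S ⊆ F` such that
removing `S` from `F` costs nothing in the span, provided `d` is put in instead. The margin `24`
keeps the remainder above half of a hyperplane of the span after a loss of `4 + 2` vectors. -/
theorem exists_exchange_set (F : Finset V)
    (hc : Nat.card (Submodule.span (ZMod 2) (F : Set V)) + 24 < 4 * F.card) {d : V}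
    (hd : d ∈ Submodule.span (ZMod 2) (F : Set V)) :
    ∃ S ⊆ F, S.card ≤ 4 ∧ ∑ x ∈ S, x = d ∧
      (Nat.card (Submodule.span (ZMod 2) (F : Set V)) < 2 * F.card → S.card ≤ 2) ∧
      Submodule.span (ZMod 2) (F : Set V) ≤
        Submodule.span (ZMod 2) (insert d ((F \ S : Finset V) : Set V)) := by
  set K := Submodule.span (ZMod 2) (F : Set V) with hK
  have hFK : ∀ x ∈ F, x ∈ K := fun x hx => Submodule.subset_span hx
  obtain ⟨S, hSF, hS4, hSd, hS2⟩ : ∃ S ⊆ F, S.card ≤ 4 ∧ ∑ x ∈ S, x = d ∧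
      (Nat.card K < 2 * F.card → S.card ≤ 2) := by
    by_cases h : Nat.card K < 2 * F.card
    · obtain ⟨S, h1, h2, h3⟩ := shortSum_two K F hFK h hd
      exact ⟨S, h1, by omega, h3, fun _ => h2⟩
    · obtain ⟨S, h1, h2, h3⟩ := shortSum_four F (by rw [← hK]; omega) hd
      exact ⟨S, h1, h2, h3, fun h' => absurd h' h⟩
  set L := Submodule.span (ZMod 2) (insert d ((F \ S : Finset V) : Set V)) with hL
  by_cases hKL : K ≤ L
  · exact ⟨S, hSF, hS4, hSd, hS2, hKL⟩
  -- otherwise `F \ S` fills more than half of `L`, and a pair inside `F \ S` does the job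
  have hLK : L ≤ K := by
    rw [hL, Submodule.span_le]
    intro x hx
    rcases hx with rfl | hx
    · exact hd
    · exact hFK x (Finset.mem_sdiff.1 hx).1
  have hlt := two_mul_card_le_of_lt (lt_of_le_not_ge hLK hKL)
  have hFSL : ∀ x ∈ F \ S, x ∈ L := fun x hx => Submodule.subset_span (Or.inr hx)
  have hc1 : (F \ S).card = F.card - S.card := Finset.card_sdiff_of_subset hSF
  obtain ⟨T, hT, hT2, hTd⟩ := shortSum_two L (F \ S) hFSL (by omega)
    (Submodule.subset_span (Or.inl rfl) : d ∈ L)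
  refine ⟨T, hT.trans Finset.sdiff_subset, by omega, hTd, fun _ => hT2, ?_⟩
  have hc2 : ((F \ S) \ T).card = (F \ S).card - T.card := Finset.card_sdiff_of_subset hT
  have hspan := span_eq_of_half L ((F \ S) \ T)
    (fun x hx => hFSL x (Finset.mem_sdiff.1 hx).1) (by omega)
  set L' := Submodule.span (ZMod 2) (insert d ((F \ T : Finset V) : Set V)) with hL'
  have hLL' : L ≤ L' := by
    rw [← hspan]
    refine Submodule.span_mono fun x hx => Or.inr ?_
    have hx := Finset.mem_sdiff.1 (Finset.mem_coe.1 hx)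
    exact Finset.mem_coe.2 (Finset.mem_sdiff.2 ⟨(Finset.mem_sdiff.1 hx.1).1, hx.2⟩)
  rw [hK, Submodule.span_le]
  intro x hx
  by_cases hxS : x ∈ S
  · refine Submodule.subset_span (Or.inr (Finset.mem_coe.2 (Finset.mem_sdiff.2 ⟨hx, ?_⟩)))
    exact fun hxT => (Finset.mem_sdiff.1 (hT hxT)).2 hxS
  · exact hLL' (hFSL x (Finset.mem_sdiff.2 ⟨hx, hxS⟩))

/-- A shortest representation over a spanning set is linearly independent, so its length is at
most the dimension `s`. -/
theorem shortSum_of_span_eq_top {s : ℕ} (hs : Fintype.card V = 2 ^ s) (F : Finset V)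
    (hF : Submodule.span (ZMod 2) (F : Set V) = ⊤) (v : V) : ShortSum F s v := by
  classical
  have hv : v ∈ Submodule.span (ZMod 2) (F : Set V) := hF ▸ Submodule.mem_top
  -- a shortest representing set has distinct subset sums
  have hex : ∃ S ⊆ F, ∑ x ∈ S, x = v := by
    have : ∃ m, ShortSum F m v := by
      refine span_induction_zmod2 (P := fun x => ∃ m, ShortSum F m x)
        (fun x hx => ⟨1, ShortSum.of_mem hx⟩) ⟨0, ShortSum.zero F⟩ ?_ hv
      rintro x y ⟨m, hm⟩ ⟨n, hn⟩
      exact ⟨_, hm.add hn⟩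
    obtain ⟨m, S, h1, -, h3⟩ := this
    exact ⟨S, h1, h3⟩
  obtain ⟨S, hS, hmin⟩ := Finset.exists_min_image
    (F.powerset.filter fun S => ∑ x ∈ S, x = v) Finset.card (by
      obtain ⟨S, h1, h2⟩ := hex
      exact ⟨S, by simp [h1, h2]⟩)
  simp only [Finset.mem_filter, Finset.mem_powerset] at hS hmin
  refine ⟨S, hS.1, ?_, hS.2⟩
  have hinj : Set.InjOn (fun T : Finset V => ∑ x ∈ T, x) (S.powerset : Set (Finset V)) := by
    intro T hT T' hT' h
    have hT := Finset.mem_powerset.1 (Finset.mem_coe.1 hT)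
    have hT' := Finset.mem_powerset.1 (Finset.mem_coe.1 hT')
    simp only at h
    have hD : symmDiff T T' ⊆ S := (Finset.symmDiff_subset_union).trans (Finset.union_subset hT hT')
    have hD0 : ∑ x ∈ symmDiff T T', x = 0 := by rw [sum_symmDiff_zmod2, h, add_self_zmod2]
    have h2 := Finset.sum_sdiff hD (f := fun x => x)
    rw [hD0, add_zero] at h2
    have h3 := hmin (S \ symmDiff T T') ⟨Finset.sdiff_subset.trans hS.1, h2.trans hS.2⟩
    rw [Finset.card_sdiff_of_subset hD] at h3
    have h4 := Finset.card_le_card hD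
    have h5 : (symmDiff T T').card = 0 ∨ S.card = 0 := by omega
    have h6 : symmDiff T T' = ∅ := by
      rcases h5 with h5 | h5
      · exact Finset.card_eq_zero.1 h5
      · exact Finset.card_eq_zero.1 (by omega)
    exact symmDiff_eq_bot.1 h6
  have hle := Finset.card_le_card_of_injOn (t := (Finset.univ : Finset V)) _
    (fun _ _ => Finset.mem_coe.2 (Finset.mem_univ _)) hinj
  rw [Finset.card_powerset, Finset.card_univ, hs] at hle
  exact (Nat.pow_le_pow_iff_right (by norm_num)).1 hle

end Density

/-! ### Allocating and rearranging recovering sets -/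

section Allocation

variable {V : Type*} [AddCommGroup V] [Module (ZMod 2) V] [Fintype V] [DecidableEq V]

/-- The first `t` requests `v 0, …, v (t - 1)` can be served by disjoint subsets of `V` in such a
way that `F` is exactly the set of vectors left over. The zero vector is available too: it
does not contribute to any sum and is discarded at the very end. -/
def Served (v : ℕ → V) (t : ℕ) (F : Finset V) : Prop :=
  ∃ R : ℕ → Finset V, (∀ i < t, ∀ j < t, i ≠ j → Disjoint (R i) (R j)) ∧
    (∀ j < t, ∑ x ∈ R j, x = v j) ∧ ∀ x, x ∈ F ↔ ∀ j < t, x ∉ R j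

theorem served_zero (v : ℕ → V) : Served v 0 Finset.univ :=
  ⟨fun _ => ∅, by simp, by simp, by simp⟩

theorem Served.extend {v : ℕ → V} {t : ℕ} {F : Finset V} (h : Served v t F) {m : ℕ}
    (hS : ShortSum F m (v t)) : ∃ F', Served v (t + 1) F' ∧ F.card ≤ F'.card + m := by
  obtain ⟨R, hdis, hsum, hF⟩ := h
  obtain ⟨S, hSF, hSm, hSv⟩ := hS
  have hSR : ∀ j < t, Disjoint S (R j) := fun j hj =>
    Finset.disjoint_left.2 fun x hx => (hF x).1 (hSF hx) j hj
  refine ⟨F \ S, ⟨Function.update R t S, ?_, ?_, ?_⟩, ?_⟩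
  · intro i hi j hj hij
    rcases eq_or_ne i t with rfl | hit
    · rw [Function.update_self, Function.update_of_ne (Ne.symm hij)]
      exact hSR j (by omega)
    · rw [Function.update_of_ne hit]
      rcases eq_or_ne j t with rfl | hjt
      · rw [Function.update_self]
        exact (hSR i (by omega)).symm
      · rw [Function.update_of_ne hjt]
        exact hdis i (by omega) j (by omega) hij
  · intro j hj
    rcases eq_or_ne j t with rfl | hjt
    · rw [Function.update_self, hSv]
    · rw [Function.update_of_ne hjt]
      exact hsum j (by omega)
  · intro x
    rw [Finset.mem_sdiff, hF]
    constructor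
    · rintro ⟨h1, h2⟩ j hj
      rcases eq_or_ne j t with rfl | hjt
      · rwa [Function.update_self]
      · rw [Function.update_of_ne hjt]
        exact h1 j (by omega)
    · intro h
      refine ⟨fun j hj => ?_, ?_⟩
      · have := h j (by omega)
        rwa [Function.update_of_ne (by omega)] at this
      · have := h t (by omega)
        rwa [Function.update_self] at this
  · have := Finset.card_sdiff_of_subset hSF
    omega

/-- If the free vectors lie in a proper subspace `K`, then `V \ K` is used up. As `K` has
index two or four and there are fewer than `3 |V| / 8` requests, one recovering set must contain several vectors
outside `K`, some of which add up to an element of `K`. -/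
theorem exists_relation {t : ℕ} {R : ℕ → Finset V} (K : Submodule (ZMod 2) V)
    (hK : K ≠ ⊤) (hR : ∀ x, x ∉ K → ∃ j < t, x ∈ R j)
    (hcK : Fintype.card V < 8 * Nat.card K) (ht : 8 * t < 3 * Fintype.card V) :
    ∃ j < t, ∃ D ⊆ R j, 2 ≤ D.card ∧ (∀ x ∈ D, x ∉ K) ∧ ∑ x ∈ D, x ∈ K := by
  classical
  have hq := K.card_eq_card_quotient_mul_card
  obtain ⟨n, hn⟩ : ∃ n, Nat.card V = 2 ^ n := by
    refine ⟨Module.finrank (ZMod 2) V, ?_⟩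
    rw [Nat.card_eq_fintype_card, Module.card_eq_pow_finrank (K := ZMod 2), ZMod.card]
  set q := Nat.card (V ⧸ K) with hqdef
  have hVc : Nat.card V = Fintype.card V := Nat.card_eq_fintype_card
  have hMpos : 0 < Nat.card K := Nat.card_pos
  have hq8 : q < 8 := by
    by_contra h
    have : 8 * Nat.card K ≤ Nat.card V := by rw [hq, mul_comm]; exact Nat.mul_le_mul_left _ (by omega)
    omega
  have hq1 : 2 * Nat.card K ≤ Nat.card V := by
    have := two_mul_card_le_of_lt (lt_top_iff_ne_top.2 hK)
    rwa [natCard_top, ← hVc] at this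
  have hqcases : q = 2 ∨ q = 4 := by
    obtain ⟨m, -, hm⟩ := (Nat.dvd_prime_pow Nat.prime_two).1 (hn ▸ Dvd.intro_left _ hq.symm : q ∣ 2 ^ n)
    have hm3 : m < 3 := by
      by_contra h
      have : 2 ^ 3 ≤ 2 ^ m := Nat.pow_le_pow_right (by norm_num) (by omega)
      omega
    interval_cases m
    · rw [hm] at hq
      omega
    · left; simpa using hm
    · right; simpa using hm
  -- `V \ K` has `|V| / 2` elements or `3 |V| / 4`, which forces two or three in one recovering set
  have hpig : ∀ m, t * m < Nat.card V - Nat.card K →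
      ∃ j < t, m < ((R j).filter (· ∉ K)).card := by
    intro m hm
    by_contra! h
    have h1 := Finset.card_biUnion_le_card_mul (Finset.range t)
      (fun j => (R j).filter (· ∉ K)) m (fun j hj => h j (Finset.mem_range.1 hj))
    have h2 : (Finset.univ.filter (· ∉ K) : Finset V) ⊆
        (Finset.range t).biUnion (fun j => (R j).filter (· ∉ K)) := by
      intro x hx
      have hx := (Finset.mem_filter.1 hx).2
      obtain ⟨j, hj, hxj⟩ := hR x hx
      exact Finset.mem_biUnion.2 ⟨j, Finset.mem_range.2 hj, Finset.mem_filter.2 ⟨hxj, hx⟩⟩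
    have h3 := Finset.card_le_card h2
    have h4 := Finset.card_filter_add_card_filter_not (s := (Finset.univ : Finset V)) (· ∈ K)
    have h5 : (Finset.univ.filter (· ∈ K) : Finset V).card = Nat.card K := by
      rw [Nat.card_eq_fintype_card, Fintype.card_subtype]
    rw [Finset.card_range] at h1
    rw [Finset.card_univ] at h4
    omega
  have hne : ∀ x : V, x ∉ K → K.mkQ x ≠ 0 := fun x hx h =>
    hx ((Submodule.Quotient.mk_eq_zero K).1 h)
  have hadd : ∀ x y : V, x + y ∉ K → K.mkQ x ≠ K.mkQ y := fun x y hx h => hx (by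
    have : K.mkQ (x + y) = 0 := by rw [map_add, h, add_self_zmod2]
    exact (Submodule.Quotient.mk_eq_zero K).1 this)
  have pair : ∀ j < t, ∀ x ∈ R j, ∀ y ∈ R j, x ≠ y → x ∉ K → y ∉ K → x + y ∈ K →
      ∃ j < t, ∃ D ⊆ R j, 2 ≤ D.card ∧ (∀ x ∈ D, x ∉ K) ∧ ∑ x ∈ D, x ∈ K := by
    intro j hj x hx y hy hxy hxK hyK hs
    refine ⟨j, hj, {x, y}, ?_, ?_, ?_, ?_⟩
    · intro z hz
      simp only [Finset.mem_insert, Finset.mem_singleton] at hz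
      rcases hz with rfl | rfl <;> assumption
    · rw [Finset.card_pair hxy]
    · intro z hz
      simp only [Finset.mem_insert, Finset.mem_singleton] at hz
      rcases hz with rfl | rfl <;> assumption
    · rwa [Finset.sum_pair hxy]
  have hfin : Fintype.card (V ⧸ K) = q := by rw [hqdef, Nat.card_eq_fintype_card]
  rcases hqcases with h2 | h4
  · rw [h2] at hq
    obtain ⟨j, hj, hcard⟩ := hpig 1 (by omega)
    obtain ⟨x, hx, y, hy, hxy⟩ := Finset.one_lt_card.1 hcard
    rw [Finset.mem_filter] at hx hy
    refine pair j hj x hx.1 y hy.1 hxy hx.2 hy.2 ?_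
    by_contra hs
    have h3 := Finset.card_le_univ ({0, K.mkQ x, K.mkQ y} : Finset (V ⧸ K))
    rw [hfin, h2, Finset.card_eq_three.2 ⟨_, _, _, (hne x hx.2).symm, (hne y hy.2).symm,
      hadd x y hs, rfl⟩] at h3
    omega
  · rw [h4] at hq
    obtain ⟨j, hj, hcard⟩ := hpig 2 (by omega)
    obtain ⟨x, y, z, hx, hy, hz, hxy, hxz, hyz⟩ := Finset.two_lt_card_iff.1 hcard
    rw [Finset.mem_filter] at hx hy hz
    by_cases s1 : x + y ∈ K
    · exact pair j hj x hx.1 y hy.1 hxy hx.2 hy.2 s1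
    by_cases s2 : x + z ∈ K
    · exact pair j hj x hx.1 z hz.1 hxz hx.2 hz.2 s2
    by_cases s3 : y + z ∈ K
    · exact pair j hj y hy.1 z hz.1 hyz hy.2 hz.2 s3
    refine ⟨j, hj, {x, y, z}, ?_, ?_, ?_, ?_⟩
    · intro w hw
      simp only [Finset.mem_insert, Finset.mem_singleton] at hw
      rcases hw with rfl | rfl | rfl
      exacts [hx.1, hy.1, hz.1]
    · rw [Finset.card_eq_three.2 ⟨x, y, z, hxy, hxz, hyz, rfl⟩]; omega
    · intro w hw
      simp only [Finset.mem_insert, Finset.mem_singleton] at hw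
      rcases hw with rfl | rfl | rfl
      exacts [hx.2, hy.2, hz.2]
    · have hsum : ∑ w ∈ ({x, y, z} : Finset V), w = x + y + z := by
        rw [Finset.sum_insert (by simp [hxy, hxz]), Finset.sum_pair hyz, add_assoc]
      rw [hsum]
      by_contra hs
      -- five distinct classes modulo a subspace of index four
      have e1 : K.mkQ (x + y) ≠ K.mkQ x := hadd _ _ (by
        rw [add_right_comm, add_self_zmod2, zero_add]; exact hy.2)
      have e2 : K.mkQ (x + y) ≠ K.mkQ y := hadd _ _ (by
        rw [add_add_cancel_zmod2]; exact hx.2)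
      have h5 : ({0, K.mkQ x, K.mkQ y, K.mkQ z, K.mkQ (x + y)} : Finset (V ⧸ K)).card = 5 := by
        have a1 := hne x hx.2
        have a2 := hne y hy.2
        have a3 := hne z hz.2
        have a4 := hne _ s1
        have a5 := hadd _ _ s1
        have a6 := hadd _ _ s2
        have a7 := hadd _ _ s3
        have a8 := hadd _ _ hs
        rw [Finset.card_insert_of_notMem, Finset.card_insert_of_notMem,
          Finset.card_insert_of_notMem, Finset.card_pair a8.symm]
        all_goals
          simp only [Finset.mem_insert, Finset.mem_singleton, not_or]
        · exact ⟨a7, e2.symm⟩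
        · exact ⟨a5, a6, e1.symm⟩
        · exact ⟨a1.symm, a2.symm, a3.symm, a4.symm⟩
      have h6 := Finset.card_le_univ
        ({0, K.mkQ x, K.mkQ y, K.mkQ z, K.mkQ (x + y)} : Finset (V ⧸ K))
      omega

/-- If the free set does not span `V`, then a recovering set can trade vectors outside of the
span for vectors inside it, which enlarges the span of the free set. The trade costs at most two free
vectors, and none if more than half of the span is free. -/
theorem Served.enlarge_span {v : ℕ → V} {t : ℕ} {F : Finset V} (h : Served v t F)
    (ht : 8 * t < 3 * Fintype.card V) (hF8 : Fintype.card V + 56 ≤ 8 * F.card)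
    (htop : Submodule.span (ZMod 2) (F : Set V) ≠ ⊤) :
    ∃ F', Served v t F' ∧
      Submodule.span (ZMod 2) (F : Set V) < Submodule.span (ZMod 2) (F' : Set V) ∧
      F.card ≤ F'.card + 2 ∧
      (Nat.card (Submodule.span (ZMod 2) (F : Set V)) < 2 * F.card → F.card ≤ F'.card) := by
  obtain ⟨R, hdis, hsum, hF⟩ := h
  set K := Submodule.span (ZMod 2) (F : Set V) with hK
  have hFK : ∀ x ∈ F, x ∈ K := fun x hx => Submodule.subset_span hx
  have hFc := card_le_of_subset_submodule K F hFK
  have hq1 : 2 * Nat.card K ≤ Fintype.card V := by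
    have := two_mul_card_le_of_lt (lt_top_iff_ne_top.2 htop)
    rwa [natCard_top] at this
  obtain ⟨j, hj, D, hDR, hD2, hDK, hDs⟩ := exists_relation (t := t) (R := R) K htop
    (fun x hx => by
      by_contra! hno
      exact hx (hFK x ((hF x).2 hno))) (by omega) ht
  obtain ⟨S, hSF, hS4, hSs, hS2, hspan⟩ := exists_exchange_set F
    (by rw [← hK]; omega) (d := ∑ x ∈ D, x) (by rw [← hK]; exact hDs)
  rw [← hK] at hspan hS2
  have hFD : Disjoint F D := Finset.disjoint_left.2 fun x hx hxD => hDK x hxD (hFK x hx)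
  have hSR : ∀ i < t, Disjoint S (R i) := fun i hi =>
    Finset.disjoint_left.2 fun x hx => (hF x).1 (hSF hx) i hi
  have hcard : (F \ S ∪ D).card = F.card - S.card + D.card := by
    rw [Finset.card_union_of_disjoint (hFD.mono_left Finset.sdiff_subset),
      Finset.card_sdiff_of_subset hSF]
  have hSc := Finset.card_le_card hSF
  have hdis' : ∀ i < t, i ≠ j → Disjoint ((R j \ D) ∪ S) (R i) := fun i hi hij =>
    Finset.disjoint_union_left.2
      ⟨(hdis j hj i hi hij.symm).mono_left Finset.sdiff_subset, hSR i hi⟩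
  refine ⟨F \ S ∪ D, ⟨Function.update R j ((R j \ D) ∪ S), ?_, ?_, ?_⟩, ?_, ?_, ?_⟩
  · intro i hi l hl hil
    rcases eq_or_ne i j with rfl | hij
    · rw [Function.update_self, Function.update_of_ne hil.symm]
      exact hdis' l hl hil.symm
    · rw [Function.update_of_ne hij]
      rcases eq_or_ne l j with rfl | hlj
      · rw [Function.update_self]
        exact (hdis' i hi hij).symm
      · rw [Function.update_of_ne hlj]
        exact hdis i hi l hl hil
  · intro i hi
    rcases eq_or_ne i j with rfl | hij
    · rw [Function.update_self, Finset.sum_union, hSs, Finset.sum_sdiff hDR]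
      · exact hsum i hi
      · exact (hSR i hi).symm.mono_left Finset.sdiff_subset
    · rw [Function.update_of_ne hij]
      exact hsum i hi
  · intro x
    constructor
    · intro hx i hi
      rcases Finset.mem_union.1 hx with hx | hx
      · obtain ⟨hxF, hxS⟩ := Finset.mem_sdiff.1 hx
        rcases eq_or_ne i j with rfl | hij
        · rw [Function.update_self, Finset.mem_union, Finset.mem_sdiff]
          rintro (h | h)
          · exact (hF x).1 hxF i hi h.1
          · exact hxS h
        · rw [Function.update_of_ne hij]
          exact (hF x).1 hxF i hi
      · rcases eq_or_ne i j with rfl | hij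
        · rw [Function.update_self, Finset.mem_union, Finset.mem_sdiff]
          rintro (h | h)
          · exact h.2 hx
          · exact Finset.disjoint_left.1 hFD (hSF h) hx
        · rw [Function.update_of_ne hij]
          exact Finset.disjoint_left.1 (hdis j hj i hi hij.symm) (hDR hx)
    · intro hx
      by_cases hxD : x ∈ D
      · exact Finset.mem_union_right _ hxD
      have hxj := hx j hj
      rw [Function.update_self, Finset.mem_union, Finset.mem_sdiff] at hxj
      push Not at hxj
      refine Finset.mem_union_left _ (Finset.mem_sdiff.2 ⟨(hF x).2 fun i hi => ?_, hxj.2⟩)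
      rcases eq_or_ne i j with rfl | hij
      · exact fun h => hxD (hxj.1 h)
      · have := hx i hi
        rwa [Function.update_of_ne hij] at this
  · have hDne : D.Nonempty := Finset.card_pos.1 (by omega)
    obtain ⟨z, hz⟩ := hDne
    have hD' : ∀ x ∈ D, x ∈ Submodule.span (ZMod 2) ((F \ S ∪ D : Finset V) : Set V) := fun x hx =>
      Submodule.subset_span (Finset.mem_coe.2 (Finset.mem_union_right _ hx))
    refine lt_of_le_not_ge (hspan.trans (Submodule.span_le.2 ?_)) fun hle => hDK z hz (hle (hD' z hz))
    intro x hx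
    rcases hx with rfl | hx
    · exact Submodule.sum_mem _ hD'
    · exact Submodule.subset_span (Finset.mem_coe.2 (Finset.mem_union_left _ hx))
  · omega
  · intro hh
    have := hS2 hh
    omega

/-- With at least `|V| / 8 + 7` vectors free, the recovering sets can be rearranged so that the free
set spans `V`, at the price of at most two free vectors, and at no price while more than a
quarter of `V` is free. -/
theorem Served.exists_span_eq_top {v : ℕ → V} {t : ℕ} {F : Finset V} (h : Served v t F)
    (ht : 8 * t < 3 * Fintype.card V) (hF8 : Fintype.card V + 56 ≤ 8 * F.card) :
    ∃ F', Served v t F' ∧ Submodule.span (ZMod 2) (F' : Set V) = ⊤ ∧ F.card ≤ F'.card + 2 ∧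
      (Fintype.card V < 4 * F.card → F.card ≤ F'.card) := by
  have htopc : Nat.card (⊤ : Submodule (ZMod 2) V) = Fintype.card V := natCard_top
  have hsub : ∀ F : Finset V, F.card ≤ Nat.card (Submodule.span (ZMod 2) (F : Set V)) := fun F =>
    card_le_of_subset_submodule _ F fun x hx => Submodule.subset_span hx
  by_cases h0 : Submodule.span (ZMod 2) (F : Set V) = ⊤
  · exact ⟨F, h, h0, by omega, fun _ => le_rfl⟩
  obtain ⟨F₁, s1, l1, c1, c1'⟩ := h.enlarge_span ht hF8 h0
  have b0 := two_mul_card_le_of_lt (lt_top_iff_ne_top.2 h0)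
  by_cases h1 : Submodule.span (ZMod 2) (F₁ : Set V) = ⊤
  · exact ⟨F₁, s1, h1, c1, fun hh => c1' (by omega)⟩
  -- the span of `F` has index at least four, so this first step was free of charge
  have b1 := two_mul_card_le_of_lt l1
  have b2 := two_mul_card_le_of_lt (lt_top_iff_ne_top.2 h1)
  have c2 := c1' (by omega)
  obtain ⟨F₂, s2, l2, c3, c3'⟩ := s1.enlarge_span ht (by omega) h1
  have b3 := two_mul_card_le_of_lt l2
  have hF := hsub F
  by_cases h2 : Submodule.span (ZMod 2) (F₂ : Set V) = ⊤
  · exact ⟨F₂, s2, h2, by omega, fun hh => by omega⟩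
  · have b4 := two_mul_card_le_of_lt (lt_top_iff_ne_top.2 h2)
    omega

/-- While more than half of `V` is free, each request takes at most two vectors. -/
theorem exists_served_pairs (v : ℕ → V) (t : ℕ) (ht : 4 * t ≤ Fintype.card V) :
    ∃ F, Served v t F ∧ Fintype.card V ≤ F.card + 2 * t := by
  induction t with
  | zero => exact ⟨_, served_zero v, by simp⟩
  | succ t ih =>
    obtain ⟨F, h, hc⟩ := ih (by omega)
    have htopc : Nat.card (⊤ : Submodule (ZMod 2) V) = Fintype.card V := natCard_top
    obtain ⟨F', h', hc'⟩ := h.extend (shortSum_two ⊤ F (fun _ _ => Submodule.mem_top)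
      (by omega) (Submodule.mem_top : v t ∈ _))
    exact ⟨F', h', by omega⟩

/-- After `|V| / 4` requests served by pairs, at most four vectors per request suffice while more
than a quarter of `V` is free, since then the spanning property is restored at no price. -/
theorem exists_served_quadruples {n : ℕ} (hn : Fintype.card V = 64 * n) (v : ℕ → V) (q : ℕ)
    (hq : q ≤ 4 * n) : ∃ F, Served v (16 * n + q) F ∧ 32 * n ≤ F.card + 4 * q := by
  induction q with
  | zero =>
    obtain ⟨F, h, hc⟩ := exists_served_pairs v (16 * n) (by omega)
    exact ⟨F, h, by omega⟩
  | succ q ih =>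
    obtain ⟨F, h, hc⟩ := ih (by omega)
    obtain ⟨F₁, h1, htop, -, hc1⟩ := h.exists_span_eq_top (by omega) (by omega)
    have hc1 := hc1 (by omega)
    have htopc : Nat.card (⊤ : Submodule (ZMod 2) V) = Fintype.card V := natCard_top
    obtain ⟨F', h', hc'⟩ := h1.extend (shortSum_four F₁ (by rw [htop]; omega)
      (by rw [htop]; exact Submodule.mem_top))
    exact ⟨F', h', by omega⟩

/-- Each of the last `c` requests costs at most `s` free vectors, plus two for restoring the
spanning property. -/
theorem exists_served_all {n s c : ℕ} (hn : Fintype.card V = 64 * n)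
    (hs : Fintype.card V = 2 ^ s) (v : ℕ → V) (hc4 : c ≤ 4 * n)
    (hc : ∀ p < c, p * (s + 2) + 7 ≤ 8 * n) (p : ℕ) (hp : p ≤ c) :
    ∃ F, Served v (20 * n + p) F ∧ 16 * n ≤ F.card + p * (s + 2) := by
  induction p with
  | zero =>
    obtain ⟨F, h, hc⟩ := exists_served_quadruples hn v (4 * n) le_rfl
    refine ⟨F, ?_, by omega⟩
    rwa [show 20 * n + 0 = 16 * n + 4 * n by ring]
  | succ p ih =>
    obtain ⟨F, h, hcF⟩ := ih (by omega)
    have hp' := hc p (by omega)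
    obtain ⟨F₁, h1, htop, hc1, -⟩ := h.exists_span_eq_top (by omega) (by omega)
    obtain ⟨F', h', hc'⟩ := h1.extend (shortSum_of_span_eq_top hs F₁ htop _)
    refine ⟨F', h', ?_⟩
    have : (p + 1) * (s + 2) = p * (s + 2) + s + 2 := by ring
    omega

end Allocation

/-! ### The simplex code -/

section Simplex

/-- The numerical facts behind `c = ⌊2 ^ (r / 2) / √24⌋`. Before each of the last `c` requests there
are at least `16 n - p (r + 2)` free vectors, where `n = 2 ^ (r - 6)`, and restoring the spanning
property needs `8 n + 7` of them. Both inequalities follow from `24 c ^ 2 ≤ 2 ^ r`, small `r` being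
checked separately. -/
theorem floor_bounds (r : ℕ) (hr : 6 ≤ r) :
    ⌊(2 : ℝ) ^ ((r : ℝ) / 2) / Real.sqrt 24⌋₊ ≤ 4 * 2 ^ (r - 6) ∧
      ∀ p < ⌊(2 : ℝ) ^ ((r : ℝ) / 2) / Real.sqrt 24⌋₊, p * (r + 2) + 7 ≤ 8 * 2 ^ (r - 6) := by
  set c := ⌊(2 : ℝ) ^ ((r : ℝ) / 2) / Real.sqrt 24⌋₊ with hc
  have hsq : 24 * c ^ 2 ≤ 2 ^ r := by
    have h1 : (c : ℝ) ≤ (2 : ℝ) ^ ((r : ℝ) / 2) / Real.sqrt 24 := Nat.floor_le (by positivity)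
    have h2 : (c : ℝ) ^ 2 ≤ ((2 : ℝ) ^ ((r : ℝ) / 2) / Real.sqrt 24) ^ 2 :=
      pow_le_pow_left₀ (by positivity) h1 2
    have h3 : ((2 : ℝ) ^ ((r : ℝ) / 2)) ^ 2 = 2 ^ r := by
      rw [← Real.rpow_natCast _ 2, ← Real.rpow_mul (by norm_num), ← Real.rpow_natCast 2 r]
      congr 1
      push_cast
      ring
    rw [div_pow, Real.sq_sqrt (by norm_num), h3, le_div_iff₀ (by norm_num)] at h2
    have h4 : ((24 * c ^ 2 : ℕ) : ℝ) ≤ ((2 ^ r : ℕ) : ℝ) := by push_cast; linarith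
    exact_mod_cast h4
  clear_value c
  clear hc
  obtain ⟨m, rfl⟩ : ∃ m, r = m + 6 := ⟨r - 6, by omega⟩
  rw [Nat.add_sub_cancel]
  rw [pow_add] at hsq
  refine ⟨?_, ?_⟩
  · have : 1 ≤ 2 ^ m := Nat.one_le_two_pow
    nlinarith
  intro p hp
  by_cases hm : m < 3
  · have hc4 : c < 4 := by
      have : 2 ^ m ≤ 2 ^ 2 := Nat.pow_le_pow_right (by norm_num) (by omega)
      nlinarith
    interval_cases m <;> interval_cases c <;> interval_cases p <;> simp at hsq ⊢
  · have hpow : 3 * (m + 8) ^ 2 ≤ 64 * 2 ^ m := by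
      clear hp hsq
      induction m, (not_lt.1 hm) using Nat.le_induction with
      | base => norm_num
      | succ m hm' ih =>
        have := ih (by omega) (by omega)
        rw [pow_succ 2 m]
        nlinarith
    have h1 : c * (m + 8) ≤ 8 * 2 ^ m := by
      refine (Nat.pow_le_pow_iff_left (n := 2) (by norm_num)).1 ?_
      have h2 : 24 * c ^ 2 * (3 * (m + 8) ^ 2) ≤ (2 ^ m * 2 ^ 6) * (64 * 2 ^ m) :=
        Nat.mul_le_mul hsq hpow
      rw [mul_pow, mul_pow]
      nlinarith
    have h3 : (p + 1) * (m + 8) ≤ c * (m + 8) := Nat.mul_le_mul_right _ hp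
    have h4 : (p + 1) * (m + 8) = p * (m + 6 + 2) + (m + 8) := by ring
    omega

end Simplex

theorem simplex_functional_batch (r : ℕ) (hr : 6 ≤ r)
    (G : Matrix (Fin r) (Fin (2 ^ r - 1)) (ZMod 2))
    (hinj : Function.Injective fun l : Fin (2 ^ r - 1) => (fun i => G i l))
    (hnz : ∀ l : Fin (2 ^ r - 1), (fun i => G i l) ≠ (0 : Fin r → ZMod 2)) :
    IsFunctionalBatch r (2 ^ r - 1)
      (2 ^ (r - 2) + 2 ^ (r - 4) + ⌊(2 : ℝ) ^ ((r : ℝ) / 2) / Real.sqrt 24⌋₊) G := by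
  have hb := floor_bounds r hr
  generalize ⌊(2 : ℝ) ^ ((r : ℝ) / 2) / Real.sqrt 24⌋₊ = c at hb ⊢
  have hcard : Fintype.card (Fin r → ZMod 2) = 2 ^ r := by simp [ZMod.card]
  have h64 : 2 ^ r = 64 * 2 ^ (r - 6) := by
    rw [show (64 : ℕ) = 2 ^ 6 by norm_num, ← pow_add]; congr 1; omega
  have h16 : 2 ^ (r - 2) = 16 * 2 ^ (r - 6) := by
    rw [show (16 : ℕ) = 2 ^ 4 by norm_num, ← pow_add]; congr 1; omega
  have h4 : 2 ^ (r - 4) = 4 * 2 ^ (r - 6) := by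
    rw [show (4 : ℕ) = 2 ^ 2 by norm_num, ← pow_add]; congr 1; omega
  have hk : 2 ^ (r - 2) + 2 ^ (r - 4) + c = 20 * 2 ^ (r - 6) + c := by omega
  generalize 2 ^ (r - 2) + 2 ^ (r - 4) + c = k at hk ⊢
  intro v _
  -- only the first `k` requests matter; the values of the padding are irrelevant
  obtain ⟨F, ⟨R, hdis, hsum, -⟩, -⟩ := exists_served_all (hcard.trans h64) hcard
    (fun j => if h : j < k then v ⟨j, h⟩ else 0) hb.1 hb.2 c le_rfl
  rw [← hk] at hdis hsum
  set col : Fin (2 ^ r - 1) → (Fin r → ZMod 2) := fun l i => G i l with hcol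
  -- by counting, the columns are exactly the nonzero vectors
  have himg : Finset.univ.image col = Finset.univ.erase 0 := by
    refine Finset.eq_of_subset_of_card_le ?_ ?_
    · intro x hx
      obtain ⟨l, -, rfl⟩ := Finset.mem_image.1 hx
      exact Finset.mem_erase.2 ⟨hnz l, Finset.mem_univ _⟩
    · rw [Finset.card_image_of_injective _ hinj, Finset.card_erase_of_mem (Finset.mem_univ _),
        Finset.card_univ, Finset.card_univ, hcard, Fintype.card_fin]
  refine ⟨fun j => Finset.univ.filter fun l => col l ∈ R j, ?_, ?_⟩
  · intro j j' hjj'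
    rw [Finset.disjoint_left]
    intro l hl hl'
    exact Finset.disjoint_left.1 (hdis j j.2 j' j'.2 fun h => hjj' (Fin.ext h))
      (Finset.mem_filter.1 hl).2 (Finset.mem_filter.1 hl').2
  · intro j i
    have h1 : (Finset.univ.filter fun l => col l ∈ R j).image col = (R j).erase 0 := by
      ext x
      simp only [Finset.mem_image, Finset.mem_filter, Finset.mem_univ, true_and, Finset.mem_erase]
      constructor
      · rintro ⟨l, hl, rfl⟩
        exact ⟨hnz l, hl⟩
      · rintro ⟨hx0, hx⟩
        obtain ⟨l, -, rfl⟩ := Finset.mem_image.1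
          (himg ▸ Finset.mem_erase.2 ⟨hx0, Finset.mem_univ x⟩ : x ∈ Finset.univ.image col)
        exact ⟨l, hx, rfl⟩
    have h2 : ∑ l ∈ Finset.univ.filter (fun l => col l ∈ R j), col l = v j := by
      rw [← Finset.sum_image (f := fun x => x) (fun a _ b _ h => hinj h), h1,
        Finset.sum_erase (R j) (a := (0 : Fin r → ZMod 2)) (f := fun x => x) rfl]
      exact (hsum j j.2).trans (dif_pos j.2)
    have h3 := congrFun h2 i
    rw [Finset.sum_apply] at h3
    exact h3
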